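/- Let X be a measurable space, let μ be a probability measure on X × X, and let μ* be the pushforward of μ under the swap map (x,y) ↦ (y,x). Assume μ and μ* are mutually absolutely continuous, and define the log Metropolis–Hastings ratio ρ(x,y) = log((dμ*/dμ)(x,y)). Then for every measurable function f : ℝ → ℝ such that ∫ |f(ρ(x,y))| dμ(x,y) < ∞, one has ∫ f(−ρ(x,y)) e^{ρ(x,y)} dμ(x,y) = ∫ f(ρ(x,y)) dμ(x,y). -/

import Mathlib

open MeasureTheory

/-- De-exponentiation identity for the log Metropolis–Hastings ratio: if `μ` is a probability
measure on `X × X` that is mutually absolutely continuous with its pushforward `μ*` under the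
swap map, `ρ p = log ((dμ*/dμ) p)`, and `f : ℝ → ℝ` is measurable with `f ∘ ρ` integrable
with respect to `μ`, then `∫ f(-ρ) e^ρ dμ = ∫ f(ρ) dμ`. -/
theorem stmt1 {X : Type*} [MeasurableSpace X] (μ : Measure (X × X)) [IsProbabilityMeasure μ]
    (h₁ : μ ≪ Measure.map Prod.swap μ) (h₂ : Measure.map Prod.swap μ ≪ μ)
    (f : ℝ → ℝ) (hf : Measurable f)
    (hint : Integrable
      (fun p => f (Real.log (((Measure.map Prod.swap μ).rnDeriv μ p).toReal))) μ) :
    ∫ p, f (- Real.log (((Measure.map Prod.swap μ).rnDeriv μ p).toReal)) *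
          Real.exp (Real.log (((Measure.map Prod.swap μ).rnDeriv μ p).toReal)) ∂μ
      = ∫ p, f (Real.log (((Measure.map Prod.swap μ).rnDeriv μ p).toReal)) ∂μ := by
  have hfin : IsFiniteMeasure (Measure.map Prod.swap μ) := inferInstance
  have hemb : MeasurableEmbedding (Prod.swap : X × X → X × X) :=
    MeasurableEquiv.prodComm.measurableEmbedding
  have hμ : Measure.map Prod.swap (Measure.map Prod.swap μ) = μ := by
    rw [Measure.map_map measurable_swap measurable_swap, Prod.swap_swap_eq, Measure.map_id]
  have hA := hemb.rnDeriv_map μ (Measure.map Prod.swap μ)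
  rw [hμ] at hA
  have hB := Measure.inv_rnDeriv' h₁
  calc _ = ∫ p, ((Measure.map Prod.swap μ).rnDeriv μ p).toReal •
        f (- Real.log (((Measure.map Prod.swap μ).rnDeriv μ p).toReal)) ∂μ := by
        apply integral_congr_ae
        filter_upwards [Measure.rnDeriv_pos' h₁,
          (Measure.map Prod.swap μ).rnDeriv_lt_top μ] with p hp hp'
        rw [Real.exp_log (ENNReal.toReal_pos hp.ne' hp'.ne), smul_eq_mul, mul_comm]
    _ = ∫ p, f (- Real.log (((Measure.map Prod.swap μ).rnDeriv μ p).toReal))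
          ∂(Measure.map Prod.swap μ) := integral_rnDeriv_smul h₂
    _ = ∫ p, f (- Real.log (((Measure.map Prod.swap μ).rnDeriv μ p.swap).toReal)) ∂μ :=
        hemb.integral_map _
    _ = _ := by
        apply integral_congr_ae
        filter_upwards [h₁.ae_le hA, hB] with p hp hp'
        rw [hp, ← hp', Pi.inv_apply, ENNReal.toReal_inv, Real.log_inv, neg_neg]
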